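/- Let $\Gamma_1, \Gamma_2$ be nontrivial groups with finite symmetric generating sets, let $\Gamma = \Gamma_1 * \Gamma_2$ with the union generating set and word metric, and let $v$ be the exponential growth rate of $\Gamma$. Define a measure $\mu$ on $\Gamma$ by $\mu(g_1 g_2) = e^{-v|g_1 g_2|}$ for $g_1 \in \Gamma_1 \setminus \{e\}$, $g_2 \in \Gamma_2 \setminus \{e\}$ (and $0$ elsewhere). Then $\mu$ is a probability measure, and its $n$-fold convolution satisfies $\mu^{*n}(g_1^1 g_2^1 \cdots g_1^n g_2^n) = e^{-v \sum_i |g_1^i g_2^i|}$ for all $g_1^i \in \Gamma_1\setminus\{e\}$, $g_2^i \in \Gamma_2\setminus\{e\}$; consequently $-\log \mu^{*n}(X_n) = v|X_n|$ almost surely for the associated random walk, and $h(\mu) = \ell(\mu) v$. -/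

import Mathlib

open Filter

/-- The word length of `g` with respect to a set `S` of generators. -/
noncomputable def wordLength {G : Type*} [Group G] (S : Set G) (g : G) : ℕ :=
  sInf {n | ∃ l : List G, (∀ x ∈ l, x ∈ S) ∧ l.length = n ∧ l.prod = g}

/-- Convolution of two measures on a group. -/
noncomputable def conv {G : Type*} [Group G] (μ₁ μ₂ : G → ℝ) : G → ℝ :=
  fun g => ∑' h, μ₁ h * μ₂ (h⁻¹ * g)

/-- `n`-fold convolution power `μ^{*n}` (with `μ^{*0} = δ_e`). -/
noncomputable def convPow {G : Type*} [Group G] (μ : G → ℝ) : ℕ → G → ℝ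
  | 0 => Set.indicator {(1 : G)} (fun _ => (1 : ℝ))
  | n + 1 => conv μ (convPow μ n)

/-- Shannon entropy of a measure on a countable set. -/
noncomputable def entropy {G : Type*} (μ : G → ℝ) : ℝ :=
  ∑' g, μ g * (-Real.log (μ g))

/-- The union generating set of a free product `G₁ ∗ G₂`. -/
def unionGens {G₁ G₂ : Type*} [Group G₁] [Group G₂] (S₁ : Finset G₁) (S₂ : Finset G₂) :
    Set (Monoid.Coprod G₁ G₂) :=
  (⇑(Monoid.Coprod.inl : G₁ →* Monoid.Coprod G₁ G₂) '' (S₁ : Set G₁)) ∪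
    (⇑(Monoid.Coprod.inr : G₂ →* Monoid.Coprod G₁ G₂) '' (S₂ : Set G₂))

/-!
Every element of `G₁ ∗ G₂` is uniquely of the form `b (a₁ b₁) ⋯ (aₙ bₙ) a` with all `aᵢ, bᵢ`
nontrivial, and word length is additive along this form. Summing `z ^ |g|` over normal forms gives
`F = F₂ (1 - (F₁ - 1) (F₂ - 1))⁻¹ F₁` for the growth series. Submultiplicativity of the ball
cardinalities makes `F` finite for `z < e⁻ᵛ` and infinite at `z = e⁻ᵛ`, so
`(F₁ - 1) (F₂ - 1) = 1` at `z = e⁻ᵛ`, which says that `μ` has total mass one. As a product of `n`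
elements of the support of `μ` determines its factors, convolution powers of `μ` have a single
nonzero term at each such product, and additivity of the length gives their value.
-/

section WordLength

variable {G H : Type*} [Group G] [Group H] {S : Set G} {T : Set H}

lemma submonoid_closure_eq_top_of_inv_mem (hgen : Subgroup.closure S = ⊤)
    (hsym : ∀ s ∈ S, s⁻¹ ∈ S) : Submonoid.closure S = ⊤ := by
  have hinv : S⁻¹ ⊆ S := fun s hs ↦ by simpa using hsym _ hs
  rw [← Set.union_eq_self_of_subset_right hinv, ← Subgroup.closure_toSubmonoid, hgen]
  rfl

lemma wordLength_prod_le {l : List G} (hl : ∀ x ∈ l, x ∈ S) :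
    wordLength S l.prod ≤ l.length :=
  Nat.sInf_le ⟨l, hl, rfl, rfl⟩

lemma wordLength_one (S : Set G) : wordLength S 1 = 0 :=
  Nat.le_zero.1 (wordLength_prod_le (l := []) (by simp))

lemma wordLength_le_one {s : G} (hs : s ∈ S) : wordLength S s ≤ 1 := by
  simpa using wordLength_prod_le (l := [s]) (by simpa using hs)

lemma exists_list_length_eq_wordLength (hS : Submonoid.closure S = ⊤) (g : G) :
    ∃ l : List G, (∀ x ∈ l, x ∈ S) ∧ l.length = wordLength S g ∧ l.prod = g := by
  obtain ⟨l, hl, hprod⟩ := Submonoid.exists_list_of_mem_closure (hS ▸ Submonoid.mem_top g)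
  exact Nat.sInf_mem (s := {n | ∃ l : List G, (∀ x ∈ l, x ∈ S) ∧ l.length = n ∧ l.prod = g})
    ⟨_, l, hl, rfl, hprod⟩

lemma wordLength_mul_le (hS : Submonoid.closure S = ⊤) (g h : G) :
    wordLength S (g * h) ≤ wordLength S g + wordLength S h := by
  obtain ⟨l, hl, hlen, rfl⟩ := exists_list_length_eq_wordLength hS g
  obtain ⟨l', hl', hlen', rfl⟩ := exists_list_length_eq_wordLength hS h
  rw [← hlen, ← hlen', ← List.length_append, ← List.prod_append]
  exact wordLength_prod_le fun x hx ↦ (List.mem_append.1 hx).elim (hl x) (hl' x)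

lemma wordLength_map_le (hS : Submonoid.closure S = ⊤) (f : G →* H) (hf : Set.MapsTo f S T)
    (g : G) : wordLength T (f g) ≤ wordLength S g := by
  obtain ⟨l, hl, hlen, rfl⟩ := exists_list_length_eq_wordLength hS g
  rw [← hlen, map_list_prod, ← List.length_map f]
  exact wordLength_prod_le (List.forall_mem_map.2 fun x hx ↦ hf (hl x hx))

lemma le_wordLength (hS : Submonoid.closure S = ⊤) {L : G → ℕ} (hL₁ : L 1 = 0)
    (hL : ∀ s ∈ S, ∀ g, L (s * g) ≤ 1 + L g) (g : G) : L g ≤ wordLength S g := by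
  obtain ⟨l, hl, hlen, rfl⟩ := exists_list_length_eq_wordLength hS g
  rw [← hlen]
  clear hlen
  induction l with
  | nil => simp [hL₁]
  | cons s l ih =>
    rw [List.forall_mem_cons] at hl
    rw [List.prod_cons, List.length_cons, add_comm]
    exact (hL s hl.1 _).trans (by gcongr; exact ih hl.2)

lemma finite_setOf_wordLength_le (hfin : S.Finite) (hS : Submonoid.closure S = ⊤) (n : ℕ) :
    {g : G | wordLength S g ≤ n}.Finite := by
  have : Finite S := hfin
  refine ((List.finite_length_le S n).image fun l ↦ (l.map Subtype.val).prod).subset fun g hg ↦ ?_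
  obtain ⟨l, hl, hlen, hprod⟩ := exists_list_length_eq_wordLength hS g
  exact ⟨l.attachWith (· ∈ S) hl, by simpa [hlen] using hg, by simpa using hprod⟩

end WordLength

section Growth

variable {G : Type*} [Group G] {S : Set G}

/-- The number of elements of word length at most `n`. -/
noncomputable def ballCard (S : Set G) (n : ℕ) : ℕ :=
  Nat.card {g : G // wordLength S g ≤ n}

/-- The exponential growth rate of `G` with respect to `S`. -/
noncomputable def growthRate (S : Set G) : ℝ :=
  liminf (fun n : ℕ ↦ Real.log (ballCard S n) / n) atTop

lemma ballCard_pos (hfin : S.Finite) (hS : Submonoid.closure S = ⊤) (n : ℕ) :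
    0 < ballCard S n := by
  have : Finite {g : G // wordLength S g ≤ n} := finite_setOf_wordLength_le hfin hS n
  have : Nonempty {g : G // wordLength S g ≤ n} := ⟨1, by simp [wordLength_one]⟩
  exact Nat.card_pos

lemma exists_mul_eq_of_wordLength_le_add (hS : Submonoid.closure S = ⊤) {m n : ℕ} {g : G}
    (hg : wordLength S g ≤ m + n) :
    ∃ x y, wordLength S x ≤ m ∧ wordLength S y ≤ n ∧ x * y = g := by
  obtain ⟨l, hl, hlen, hprod⟩ := exists_list_length_eq_wordLength hS g
  refine ⟨(l.take m).prod, (l.drop m).prod, ?_, ?_, by rw [List.prod_take_mul_prod_drop, hprod]⟩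
  · exact (wordLength_prod_le fun x hx ↦ hl x (List.mem_of_mem_take hx)).trans
      (List.length_take_le _ _)
  · refine (wordLength_prod_le fun x hx ↦ hl x (List.mem_of_mem_drop hx)).trans ?_
    rw [List.length_drop]
    lia

lemma ballCard_add_le (hfin : S.Finite) (hS : Submonoid.closure S = ⊤) (m n : ℕ) :
    ballCard S (m + n) ≤ ballCard S m * ballCard S n := by
  have (k : ℕ) : Finite {g : G // wordLength S g ≤ k} := finite_setOf_wordLength_le hfin hS k
  choose x y hx hy hxy using
    fun g : {g : G // wordLength S g ≤ m + n} ↦ exists_mul_eq_of_wordLength_le_add hS g.2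
  rw [ballCard, ballCard, ballCard, ← Nat.card_prod]
  refine Nat.card_le_card_of_injective (fun g ↦ (⟨x g, hx g⟩, ⟨y g, hy g⟩)) fun g g' h ↦ ?_
  simp only [Prod.mk.injEq, Subtype.mk.injEq] at h
  exact Subtype.ext (by rw [← hxy g, ← hxy g', h.1, h.2])

lemma subadditive_log_ballCard (hfin : S.Finite) (hS : Submonoid.closure S = ⊤) :
    Subadditive fun n ↦ Real.log (ballCard S n) := fun m n ↦ by
  have hpos (k : ℕ) : (0 : ℝ) < ballCard S k := mod_cast ballCard_pos hfin hS k
  rw [← Real.log_mul (hpos m).ne' (hpos n).ne']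
  exact Real.log_le_log (hpos _) (mod_cast ballCard_add_le hfin hS m n)

lemma log_ballCard_div_nonneg (S : Set G) (n : ℕ) : 0 ≤ Real.log (ballCard S n) / n :=
  div_nonneg (Real.log_natCast_nonneg _) n.cast_nonneg

lemma bddBelow_range_log_ballCard_div (S : Set G) :
    BddBelow (Set.range fun n : ℕ ↦ Real.log (ballCard S n) / n) :=
  ⟨0, Set.forall_mem_range.2 (log_ballCard_div_nonneg S)⟩

lemma growthRate_eq_lim (hfin : S.Finite) (hS : Submonoid.closure S = ⊤) :
    growthRate S = (subadditive_log_ballCard hfin hS).lim :=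
  ((subadditive_log_ballCard hfin hS).tendsto_lim (bddBelow_range_log_ballCard_div S)).liminf_eq

lemma tendsto_log_ballCard_div (hfin : S.Finite) (hS : Submonoid.closure S = ⊤) :
    Tendsto (fun n : ℕ ↦ Real.log (ballCard S n) / n) atTop (nhds (growthRate S)) :=
  growthRate_eq_lim hfin hS ▸
    (subadditive_log_ballCard hfin hS).tendsto_lim (bddBelow_range_log_ballCard_div S)

lemma growthRate_nonneg (hfin : S.Finite) (hS : Submonoid.closure S = ⊤) : 0 ≤ growthRate S :=
  ge_of_tendsto' (tendsto_log_ballCard_div hfin hS) (log_ballCard_div_nonneg S)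

lemma exp_growthRate_mul_le_ballCard (hfin : S.Finite) (hS : Submonoid.closure S = ⊤) (n : ℕ) :
    Real.exp (growthRate S * n) ≤ ballCard S n := by
  rw [← Real.le_log_iff_exp_le (mod_cast ballCard_pos hfin hS n)]
  rcases n.eq_zero_or_pos with rfl | hn
  · simpa using Real.log_natCast_nonneg _
  · rw [← le_div_iff₀ (by positivity), growthRate_eq_lim hfin hS]
    exact (subadditive_log_ballCard hfin hS).lim_le_div (bddBelow_range_log_ballCard_div S) hn.ne'

end Growth

section GrowthSeries

open scoped ENNReal

variable {G : Type*} [Group G] {S : Set G}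

/-- The growth series `F(z) = ∑ z^|g|`, with values in `[0, ∞]` so that it is defined for
every `z ≥ 0`. -/
noncomputable def growthSeries (S : Set G) (z : ℝ≥0∞) : ℝ≥0∞ :=
  ∑' g, z ^ wordLength S g

lemma ofReal_exp_neg_pow (w : ℝ) (n : ℕ) :
    ENNReal.ofReal (Real.exp (-w)) ^ n = ENNReal.ofReal (Real.exp (-(w * n))) := by
  rw [← ENNReal.ofReal_pow (Real.exp_pos _).le, ← Real.exp_nat_mul]
  congr 2
  ring

lemma one_add_tsum_ne_one (S : Set G) (z : ℝ≥0∞) :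
    1 + ∑' g : {g : G // g ≠ 1}, z ^ wordLength S g.1 = growthSeries S z := by
  have hone : ∑' g : ({1} : Set G), z ^ wordLength S g.1 = 1 := by simp [wordLength_one]
  rw [growthSeries, ← ENNReal.summable.tsum_add_tsum_compl (s := ({1} : Set G)) ENNReal.summable,
    hone]
  rfl

lemma growthSeries_sub_one (S : Set G) (z : ℝ≥0∞) :
    growthSeries S z - 1 = ∑' g : {g : G // g ≠ 1}, z ^ wordLength S g.1 := by
  rw [← one_add_tsum_ne_one, ENNReal.add_sub_cancel_left ENNReal.one_ne_top]

lemma one_le_growthSeries (S : Set G) (z : ℝ≥0∞) : 1 ≤ growthSeries S z :=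
  one_add_tsum_ne_one S z ▸ le_self_add

lemma growthSeries_lt_top_of_sub_one {z : ℝ≥0∞} (h : growthSeries S z - 1 < ∞) :
    growthSeries S z < ∞ := by
  rw [← tsub_add_cancel_of_le (one_le_growthSeries S z)]
  exact ENNReal.add_lt_top.2 ⟨h, ENNReal.one_lt_top⟩

lemma growthSeries_sub_one_ne_zero [Nontrivial G] (S : Set G) {z : ℝ≥0∞} (hz : z ≠ 0) :
    growthSeries S z - 1 ≠ 0 := by
  obtain ⟨g, hg⟩ := exists_ne (1 : G)
  rw [growthSeries_sub_one]
  exact fun h ↦ pow_ne_zero _ hz (ENNReal.tsum_eq_zero.1 h ⟨g, hg⟩)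

lemma tsum_ite_le_pow (z : ℝ≥0∞) (m : ℕ) :
    (∑' n, if m ≤ n then z ^ n else 0) = z ^ m * (1 - z)⁻¹ := by
  have hsupp : Function.support (fun n ↦ if m ≤ n then z ^ n else 0) ⊆ Set.range (m + ·) := by
    intro n hn
    have hmn : m ≤ n := by_contra fun h ↦ hn (if_neg h)
    exact ⟨n - m, Nat.add_sub_of_le hmn⟩
  rw [← (add_right_injective m).tsum_eq hsupp, ← ENNReal.tsum_geometric, ← ENNReal.tsum_mul_left]
  simp [pow_add]

lemma tsum_ballCard_mul_pow (hfin : S.Finite) (hS : Submonoid.closure S = ⊤) (z : ℝ≥0∞) :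
    ∑' n, (ballCard S n : ℝ≥0∞) * z ^ n = growthSeries S z * (1 - z)⁻¹ := by
  have hball (n : ℕ) :
      (ballCard S n : ℝ≥0∞) * z ^ n = ∑' g, if wordLength S g ≤ n then z ^ n else 0 := by
    have : Finite {g : G // wordLength S g ≤ n} := finite_setOf_wordLength_le hfin hS n
    calc (ballCard S n : ℝ≥0∞) * z ^ n = ∑' _ : {g : G // wordLength S g ≤ n}, z ^ n := by
          rw [ENNReal.tsum_const, ENat.card_eq_coe_natCard]; rfl
      _ = _ := by
          refine (tsum_subtype {g : G | wordLength S g ≤ n} fun _ ↦ z ^ n).trans ?_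
          simp only [Set.indicator_apply, Set.mem_ofPred_eq]
  simp_rw [hball]
  rw [ENNReal.tsum_comm, growthSeries, ← ENNReal.tsum_mul_right]
  exact tsum_congr fun g ↦ tsum_ite_le_pow z (wordLength S g)

lemma summable_ballCard_mul_exp (hfin : S.Finite) (hS : Submonoid.closure S = ⊤) {w : ℝ}
    (hw : growthRate S < w) : Summable fun n : ℕ ↦ ballCard S n * Real.exp (-(w * n)) := by
  obtain ⟨u, hu, huw⟩ := exists_between hw
  have hgeom : Summable fun n : ℕ ↦ Real.exp (-(w - u)) ^ n :=
    summable_geometric_of_lt_one (Real.exp_pos _).le (Real.exp_lt_one_iff.2 (by linarith))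
  refine hgeom.of_norm_bounded_eventually_nat ?_
  filter_upwards [(tendsto_log_ballCard_div hfin hS).eventually_lt_const hu,
    eventually_gt_atTop 0] with n hn hpos
  have hball : (ballCard S n : ℝ) ≤ Real.exp (u * n) := by
    rw [div_lt_iff₀ (by positivity)] at hn
    exact Real.le_exp_of_log_le hn.le
  calc ‖ballCard S n * Real.exp (-(w * n))‖ = ballCard S n * Real.exp (-(w * n)) :=
        Real.norm_of_nonneg (by positivity)
    _ ≤ Real.exp (u * n) * Real.exp (-(w * n)) := by gcongr
    _ = Real.exp (-(w - u)) ^ n := by rw [← Real.exp_add, ← Real.exp_nat_mul]; congr 1; ring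

lemma growthSeries_lt_top (hfin : S.Finite) (hS : Submonoid.closure S = ⊤) {w : ℝ}
    (hw : growthRate S < w) : growthSeries S (ENNReal.ofReal (Real.exp (-w))) < ∞ := by
  set z := ENNReal.ofReal (Real.exp (-w)) with hz
  have hterm (n : ℕ) : (ballCard S n : ℝ≥0∞) * z ^ n
      = ENNReal.ofReal (ballCard S n * Real.exp (-(w * n))) := by
    rw [hz, ofReal_exp_neg_pow, ENNReal.ofReal_mul (Nat.cast_nonneg _), ENNReal.ofReal_natCast]
  calc growthSeries S z ≤ growthSeries S z * (1 - z)⁻¹ :=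
        le_mul_of_one_le_right' (ENNReal.one_le_inv.2 tsub_le_self)
    _ = ∑' n : ℕ, ENNReal.ofReal (ballCard S n * Real.exp (-(w * n))) := by
        rw [← tsum_ballCard_mul_pow hfin hS, tsum_congr hterm]
    _ < ∞ := (summable_ballCard_mul_exp hfin hS hw).tsum_ofReal_lt_top

lemma growthSeries_growthRate [Infinite G] (hfin : S.Finite) (hS : Submonoid.closure S = ⊤) :
    growthSeries S (ENNReal.ofReal (Real.exp (-growthRate S))) = ∞ := by
  set z := ENNReal.ofReal (Real.exp (-growthRate S)) with hz
  rcases (growthRate_nonneg hfin hS).eq_or_lt with hzero | hpos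
  · simp [growthSeries, hz, ← hzero]
  have hz_lt : z < 1 := by simpa [hz] using hpos
  have hterm (n : ℕ) : 1 ≤ (ballCard S n : ℝ≥0∞) * z ^ n := by
    rw [hz, ofReal_exp_neg_pow, ← ENNReal.ofReal_natCast, ← ENNReal.ofReal_mul (Nat.cast_nonneg _),
      ENNReal.one_le_ofReal, Real.exp_neg, ← div_eq_mul_inv, one_le_div (Real.exp_pos _)]
    exact exp_growthRate_mul_le_ballCard hfin hS n
  have hdiv : growthSeries S z * (1 - z)⁻¹ = ∞ := by
    rw [← tsum_ballCard_mul_pow hfin hS, eq_top_iff,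
      ← ENNReal.tsum_const_eq_top_of_ne_zero (α := ℕ) one_ne_zero]
    exact ENNReal.tsum_le_tsum hterm
  by_contra hne
  exact ENNReal.mul_ne_top hne (ENNReal.inv_ne_top.2 (tsub_pos_of_lt hz_lt).ne') hdiv

end GrowthSeries

section LeftMulPermHom

variable {G X Y : Type*} [Group G] (e : X ≃ G × Y)

/-- The action of `G` on a type identified with `G × Y` by left multiplication on the first
factor. -/
def leftMulPermHom : G →* Equiv.Perm X where
  toFun g := (e.trans ((Equiv.mulLeft g).prodCongr (Equiv.refl Y))).trans e.symm
  map_one' := by ext; simp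
  map_mul' g h := by ext; simp [Prod.map]

end LeftMulPermHom

section NormalForm

open Monoid Monoid.Coprod

variable (G₁ G₂ : Type*) [Group G₁] [Group G₂]

/-- The pairs of nontrivial elements `(a, b)`, encoding the elements `g₁ g₂` of the support
of `μ`. -/
abbrev NontrivialPair := {a : G₁ // a ≠ 1} × {b : G₂ // b ≠ 1}

/-- Normal forms of the elements of `G₁ ∗ G₂`: the triple `(b, [(a₁, b₁), …, (aₙ, bₙ)], a)` encodes
`b (a₁ b₁) ⋯ (aₙ bₙ) a`, where the outer factors `b` and `a` may be trivial. -/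
abbrev NormalForm := G₂ × List (NontrivialPair G₁ G₂) × G₁

variable {G₁ G₂}

/-- The element `g₁ g₂` of the free product. -/
def NontrivialPair.prod (p : NontrivialPair G₁ G₂) : Coprod G₁ G₂ := inl p.1.1 * inr p.2.1

namespace NormalForm

/-- The element of the free product represented by a normal form. -/
def eval (x : NormalForm G₁ G₂) : Coprod G₁ G₂ :=
  inr x.1 * (x.2.1.map NontrivialPair.prod).prod * inl x.2.2

open Classical in
/-- Splits off a possibly trivial leading `G₁`-factor. The rest is empty (`none`) or starts with a
nontrivial `G₂`-factor. -/
noncomputable def splitInl :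
    NormalForm G₁ G₂ ≃ G₁ × Option ({b : G₂ // b ≠ 1} × List (NontrivialPair G₁ G₂) × G₁) where
  toFun
    | (b, l, c) => if hb : b = 1 then
        match l with
        | [] => (c, none)
        | p :: l => (p.1, some (p.2, l, c))
      else (1, some (⟨b, hb⟩, l, c))
  invFun
    | (c, none) => (1, [], c)
    | (a, some (b, l, c)) => if ha : a = 1 then (b, l, c) else (1, (⟨a, ha⟩, b) :: l, c)
  left_inv := by
    rintro ⟨b, _ | ⟨⟨⟨a', ha'⟩, b'⟩, l⟩, c⟩ <;> by_cases hb : b = 1 <;> simp_all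
  right_inv := by
    rintro ⟨a, _ | ⟨⟨b, hb⟩, l, c⟩⟩
    · simp
    · by_cases ha : a = 1 <;> simp [ha, hb]

lemma splitInl_one_cons (p : NontrivialPair G₁ G₂) (l : List (NontrivialPair G₁ G₂)) (c : G₁) :
    splitInl (1, p :: l, c) = (p.1.1, some (p.2, l, c)) := by
  simp [splitInl]

lemma eval_splitInl_symm (a : G₁) (r) :
    eval (G₂ := G₂) (splitInl.symm (a, r)) = inl a * eval (splitInl.symm (1, r)) := by
  rcases r with _ | ⟨b, l, c⟩
  · simp [splitInl, eval]
  · by_cases ha : a = 1 <;> simp [splitInl, eval, NontrivialPair.prod, ha, mul_assoc]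

/-- The action of the free product on normal forms by left multiplication. -/
noncomputable def action : Coprod G₁ G₂ →* Equiv.Perm (NormalForm G₁ G₂) :=
  lift (leftMulPermHom splitInl) (leftMulPermHom (Equiv.refl _))

lemma action_inl (a : G₁) (x : NormalForm G₁ G₂) :
    action (inl a) x = splitInl.symm (a * (splitInl x).1, (splitInl x).2) :=
  rfl

lemma action_inr (b : G₂) (x : NormalForm G₁ G₂) : action (inr b) x = (b * x.1, x.2) :=
  rfl

lemma eval_action (g : Coprod G₁ G₂) (x : NormalForm G₁ G₂) : eval (action g x) = g * eval x := by
  induction g using Coprod.induction_on' with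
  | one => simp
  | inl_mul a g ih =>
    rw [map_mul, Equiv.Perm.mul_apply, action_inl, eval_splitInl_symm, map_mul, mul_assoc,
      ← eval_splitInl_symm, Prod.mk.eta, Equiv.symm_apply_apply, ih, mul_assoc]
  | inr_mul b g ih =>
    rw [map_mul, Equiv.Perm.mul_apply, action_inr, mul_assoc, ← ih]
    simp [eval, mul_assoc]

lemma action_prod_eq_cons (p : NontrivialPair G₁ G₂) (l : List (NontrivialPair G₁ G₂)) (c : G₁) :
    action p.prod (1, l, c) = (1, p :: l, c) := by
  have hp : splitInl (G₁ := G₁) (p.2.1, l, c) = (1, some (p.2, l, c)) := by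
    simp [splitInl, p.2.2]
  rw [NontrivialPair.prod, map_mul, Equiv.Perm.mul_apply, action_inr, action_inl, mul_one, hp,
    mul_one, ← splitInl_one_cons, Equiv.symm_apply_apply]

lemma action_eval (x : NormalForm G₁ G₂) : action x.eval (1, [], 1) = x := by
  obtain ⟨b, l, c⟩ := x
  have hl : action (l.map NontrivialPair.prod).prod (1, [], c) = (1, l, c) := by
    induction l with
    | nil => simp
    | cons p l ih =>
      rw [List.map_cons, List.prod_cons, map_mul, Equiv.Perm.mul_apply, ih, action_prod_eq_cons]
  have hc : action (inl c) ((1, [], 1) : NormalForm G₁ G₂) = (1, [], c) := by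
    simp [action_inl, splitInl]
  rw [eval, map_mul, map_mul, Equiv.Perm.mul_apply, Equiv.Perm.mul_apply, hc, hl, action_inr,
    mul_one]

lemma eval_one : eval (1, [], 1) = (1 : Coprod G₁ G₂) := by
  simp [eval]

variable (G₁ G₂) in
/-- Every element of the free product has a unique normal form. -/
noncomputable def equivCoprod : NormalForm G₁ G₂ ≃ Coprod G₁ G₂ where
  toFun := eval
  invFun g := action g (1, [], 1)
  left_inv := action_eval
  right_inv g := by rw [eval_action, eval_one, mul_one]

lemma equivCoprod_symm_mul (g h : Coprod G₁ G₂) :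
    (equivCoprod G₁ G₂).symm (g * h) = action g ((equivCoprod G₁ G₂).symm h) := by
  change action (g * h) _ = action g (action h _)
  rw [map_mul, Equiv.Perm.mul_apply]

end NormalForm

lemma NontrivialPair.list_prod_injective :
    Function.Injective fun l : List (NontrivialPair G₁ G₂) ↦ (l.map prod).prod := fun l l' h ↦ by
  have heval : NormalForm.eval (1, l, 1) = NormalForm.eval (1, l', 1) := by
    simpa [NormalForm.eval] using h
  simpa using (NormalForm.equivCoprod G₁ G₂).injective heval

lemma NontrivialPair.prod_injective :
    Function.Injective (prod : NontrivialPair G₁ G₂ → Coprod G₁ G₂) := fun p q h ↦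
  List.singleton_injective (list_prod_injective (by simpa using h))

instance infinite_coprod [Nontrivial G₁] [Nontrivial G₂] : Infinite (Coprod G₁ G₂) := by
  obtain ⟨a, ha⟩ := exists_ne (1 : G₁)
  obtain ⟨b, hb⟩ := exists_ne (1 : G₂)
  have : Nonempty (NontrivialPair G₁ G₂) := ⟨⟨a, ha⟩, ⟨b, hb⟩⟩
  exact Infinite.of_injective _ NontrivialPair.list_prod_injective

end NormalForm

section FreeProductLength

open Monoid Monoid.Coprod

variable {G₁ G₂ : Type*} [Group G₁] [Group G₂] {S₁ : Finset G₁} {S₂ : Finset G₂}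

lemma finite_unionGens (S₁ : Finset G₁) (S₂ : Finset G₂) : (unionGens S₁ S₂).Finite :=
  (S₁.finite_toSet.image _).union (S₂.finite_toSet.image _)

lemma closure_unionGens (h₁ : Submonoid.closure (S₁ : Set G₁) = ⊤)
    (h₂ : Submonoid.closure (S₂ : Set G₂) = ⊤) : Submonoid.closure (unionGens S₁ S₂) = ⊤ := by
  rw [unionGens, Submonoid.closure_union, ← MonoidHom.map_mclosure, ← MonoidHom.map_mclosure,
    h₁, h₂, ← MonoidHom.mrange_eq_map, ← MonoidHom.mrange_eq_map, mrange_inl_sup_mrange_inr]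

lemma mapsTo_inl_unionGens : Set.MapsTo inl (S₁ : Set G₁) (unionGens S₁ S₂) :=
  fun a ha ↦ Or.inl ⟨a, ha, rfl⟩

lemma mapsTo_inr_unionGens : Set.MapsTo inr (S₂ : Set G₂) (unionGens S₁ S₂) :=
  fun b hb ↦ Or.inr ⟨b, hb, rfl⟩

/-- The length `|a| + |b|` of the word `a b`. -/
noncomputable def NontrivialPair.length (S₁ : Finset G₁) (S₂ : Finset G₂)
    (p : NontrivialPair G₁ G₂) : ℕ :=
  wordLength (S₁ : Set G₁) p.1.1 + wordLength (S₂ : Set G₂) p.2.1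

namespace NormalForm

/-- The sum of the word lengths of the factors of a normal form. -/
noncomputable def length (S₁ : Finset G₁) (S₂ : Finset G₂) (x : NormalForm G₁ G₂) : ℕ :=
  wordLength (S₂ : Set G₂) x.1 + (x.2.1.map (NontrivialPair.length S₁ S₂)).sum
    + wordLength (S₁ : Set G₁) x.2.2

lemma length_splitInl_symm (a : G₁) (r) :
    length S₁ S₂ (splitInl.symm (a, r)) =
      wordLength (S₁ : Set G₁) a + length S₁ S₂ (splitInl.symm (1, r)) := by
  rcases r with _ | ⟨b, l, c⟩
  · simp [splitInl, length, wordLength_one]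
  · by_cases ha : a = 1 <;>
      simp [splitInl, length, NontrivialPair.length, wordLength_one, ha, add_assoc]

lemma length_action_inl_le (h₁ : Submonoid.closure (S₁ : Set G₁) = ⊤) {s : G₁} (hs : s ∈ S₁)
    (x : NormalForm G₁ G₂) : length S₁ S₂ (action (inl s) x) ≤ 1 + length S₁ S₂ x := by
  obtain ⟨⟨a, r⟩, rfl⟩ := splitInl.symm.surjective x
  rw [action_inl, Equiv.apply_symm_apply, length_splitInl_symm, length_splitInl_symm a]
  have hmul := wordLength_mul_le h₁ s a
  have hone := wordLength_le_one (S := (S₁ : Set G₁)) hs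
  lia

lemma length_action_inr_le (h₂ : Submonoid.closure (S₂ : Set G₂) = ⊤) {s : G₂} (hs : s ∈ S₂)
    (x : NormalForm G₁ G₂) : length S₁ S₂ (action (inr s) x) ≤ 1 + length S₁ S₂ x := by
  have hmul := wordLength_mul_le h₂ s x.1
  have hone := wordLength_le_one (S := (S₂ : Set G₂)) hs
  rw [action_inr, length, length]
  lia

lemma length_le_wordLength_eval (h₁ : Submonoid.closure (S₁ : Set G₁) = ⊤)
    (h₂ : Submonoid.closure (S₂ : Set G₂) = ⊤) (x : NormalForm G₁ G₂) :
    x.length S₁ S₂ ≤ wordLength (unionGens S₁ S₂) x.eval := by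
  let L (g : Coprod G₁ G₂) : ℕ := length S₁ S₂ ((equivCoprod G₁ G₂).symm g)
  have hL₁ : L 1 = 0 := by
    simp [L, equivCoprod, length, wordLength_one]
  have hL (s) (hs : s ∈ unionGens S₁ S₂) (g) : L (s * g) ≤ 1 + L g := by
    simp only [L, equivCoprod_symm_mul]
    rcases hs with ⟨a, ha, rfl⟩ | ⟨b, hb, rfl⟩
    · exact length_action_inl_le h₁ ha _
    · exact length_action_inr_le h₂ hb _
  calc x.length S₁ S₂ = L x.eval := congrArg _ (action_eval x).symm
    _ ≤ wordLength (unionGens S₁ S₂) x.eval := le_wordLength (closure_unionGens h₁ h₂) hL₁ hL _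

lemma wordLength_eval_le (h₁ : Submonoid.closure (S₁ : Set G₁) = ⊤)
    (h₂ : Submonoid.closure (S₂ : Set G₂) = ⊤) (x : NormalForm G₁ G₂) :
    wordLength (unionGens S₁ S₂) x.eval ≤ x.length S₁ S₂ := by
  obtain ⟨b, l, c⟩ := x
  have hmul := wordLength_mul_le (closure_unionGens h₁ h₂)
  have hinl := wordLength_map_le (T := unionGens S₁ S₂) h₁ inl mapsTo_inl_unionGens
  have hinr := wordLength_map_le (T := unionGens S₁ S₂) h₂ inr mapsTo_inr_unionGens
  have hprod : wordLength (unionGens S₁ S₂) (l.map NontrivialPair.prod).prod ≤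
      (l.map (NontrivialPair.length S₁ S₂)).sum := by
    induction l with
    | nil => simp [wordLength_one]
    | cons p l ih =>
      have hp : wordLength (unionGens S₁ S₂) p.prod ≤ p.length S₁ S₂ :=
        (hmul _ _).trans (add_le_add (hinl _) (hinr _))
      exact (hmul _ _).trans (add_le_add hp ih)
  exact (hmul _ _).trans (add_le_add ((hmul _ _).trans (add_le_add (hinr b) hprod)) (hinl c))

lemma wordLength_eval (h₁ : Submonoid.closure (S₁ : Set G₁) = ⊤)
    (h₂ : Submonoid.closure (S₂ : Set G₂) = ⊤) (x : NormalForm G₁ G₂) :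
    wordLength (unionGens S₁ S₂) x.eval = x.length S₁ S₂ :=
  (wordLength_eval_le h₁ h₂ x).antisymm (length_le_wordLength_eval h₁ h₂ x)

end NormalForm

namespace NontrivialPair

lemma wordLength_list_prod (h₁ : Submonoid.closure (S₁ : Set G₁) = ⊤)
    (h₂ : Submonoid.closure (S₂ : Set G₂) = ⊤) (l : List (NontrivialPair G₁ G₂)) :
    wordLength (unionGens S₁ S₂) (l.map prod).prod = (l.map (length S₁ S₂)).sum := by
  simpa [NormalForm.eval, NormalForm.length, wordLength_one] using
    NormalForm.wordLength_eval h₁ h₂ (1, l, 1)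

lemma wordLength_prod (h₁ : Submonoid.closure (S₁ : Set G₁) = ⊤)
    (h₂ : Submonoid.closure (S₂ : Set G₂) = ⊤) (p : NontrivialPair G₁ G₂) :
    wordLength (unionGens S₁ S₂) p.prod = p.length S₁ S₂ := by
  simpa using wordLength_list_prod h₁ h₂ [p]

lemma natCast_wordLength_list_prod (h₁ : Submonoid.closure (S₁ : Set G₁) = ⊤)
    (h₂ : Submonoid.closure (S₂ : Set G₂) = ⊤) (l : List (NontrivialPair G₁ G₂)) :
    (wordLength (unionGens S₁ S₂) (l.map prod).prod : ℝ) =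
      (l.map fun p ↦ (wordLength (unionGens S₁ S₂) p.prod : ℝ)).sum := by
  simp only [wordLength_list_prod h₁ h₂, wordLength_prod h₁ h₂, Nat.cast_list_sum, List.map_map]
  rfl

end NontrivialPair

end FreeProductLength

section FreeProductGrowth

open scoped ENNReal
open Monoid

lemma tsum_fin_list_prod {P : Type*} (f : P → ℝ≥0∞) (n : ℕ) :
    ∑' x : Fin n → P, ((List.ofFn x).map f).prod = (∑' p, f p) ^ n := by
  induction n with
  | zero => simp [tsum_fintype]
  | succ n ih =>
    rw [← (Fin.consEquiv fun _ : Fin (n + 1) ↦ P).tsum_eq, ENNReal.tsum_prod', pow_succ', ← ih,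
      ← ENNReal.tsum_mul_right]
    simp [Fin.consEquiv, ENNReal.tsum_mul_left]

lemma tsum_list_prod {P : Type*} (f : P → ℝ≥0∞) :
    ∑' l : List P, (l.map f).prod = (1 - ∑' p, f p)⁻¹ := by
  rw [← (List.equivSigmaTuple (α := P)).symm.tsum_eq, ENNReal.tsum_sigma',
    ← ENNReal.tsum_geometric]
  exact tsum_congr (tsum_fin_list_prod f)

lemma pow_list_sum {M : Type*} [Monoid M] (z : M) (l : List ℕ) :
    z ^ l.sum = (l.map (z ^ ·)).prod := by
  induction l with
  | nil => simp
  | cons n l ih => simp [pow_add, ih]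

variable {G₁ G₂ : Type*} [Group G₁] [Group G₂] {S₁ : Finset G₁} {S₂ : Finset G₂}

lemma tsum_pow_pair_length (S₁ : Finset G₁) (S₂ : Finset G₂) (z : ℝ≥0∞) :
    ∑' p : NontrivialPair G₁ G₂, z ^ p.length S₁ S₂ =
      (growthSeries (S₁ : Set G₁) z - 1) * (growthSeries (S₂ : Set G₂) z - 1) := by
  simp only [NontrivialPair.length, pow_add, growthSeries_sub_one, ENNReal.tsum_prod',
    ENNReal.tsum_mul_left, ENNReal.tsum_mul_right]

lemma growthSeries_unionGens (h₁ : Submonoid.closure (S₁ : Set G₁) = ⊤)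
    (h₂ : Submonoid.closure (S₂ : Set G₂) = ⊤) (z : ℝ≥0∞) :
    growthSeries (unionGens S₁ S₂) z = growthSeries (S₂ : Set G₂) z *
      ((1 - (growthSeries (S₁ : Set G₁) z - 1) * (growthSeries (S₂ : Set G₂) z - 1))⁻¹ *
        growthSeries (S₁ : Set G₁) z) := by
  have hlength (x : NormalForm G₁ G₂) :
      z ^ wordLength (unionGens S₁ S₂) (NormalForm.equivCoprod G₁ G₂ x) =
        z ^ wordLength (S₂ : Set G₂) x.1 *
          ((x.2.1.map fun p ↦ z ^ p.length S₁ S₂).prod * z ^ wordLength (S₁ : Set G₁) x.2.2) := by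
    change z ^ wordLength (unionGens S₁ S₂) x.eval = _
    rw [NormalForm.wordLength_eval h₁ h₂, NormalForm.length, pow_add, pow_add, pow_list_sum,
      List.map_map, mul_assoc]
    rfl
  rw [growthSeries, ← (NormalForm.equivCoprod G₁ G₂).tsum_eq, tsum_congr hlength,
    ← tsum_pow_pair_length, ← tsum_list_prod]
  simp only [growthSeries, ENNReal.tsum_prod', ENNReal.tsum_mul_left, ENNReal.tsum_mul_right]

lemma growthSeries_sub_one_mul_lt_one (h₁ : Submonoid.closure (S₁ : Set G₁) = ⊤)
    (h₂ : Submonoid.closure (S₂ : Set G₂) = ⊤) {z : ℝ≥0∞}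
    (hz : growthSeries (unionGens S₁ S₂) z < ∞) :
    (growthSeries (S₁ : Set G₁) z - 1) * (growthSeries (S₂ : Set G₂) z - 1) < 1 := by
  rw [growthSeries_unionGens h₁ h₂] at hz
  refine tsub_pos_iff_lt.1 (ENNReal.inv_lt_top.1 (lt_of_le_of_lt ?_ hz))
  exact (le_mul_of_one_le_right' (one_le_growthSeries (S₁ : Set G₁) z)).trans
    (le_mul_of_one_le_left' (one_le_growthSeries (S₂ : Set G₂) z))

lemma growthSeries_unionGens_lt_top [Nontrivial G₁] [Nontrivial G₂]
    (h₁ : Submonoid.closure (S₁ : Set G₁) = ⊤) (h₂ : Submonoid.closure (S₂ : Set G₂) = ⊤)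
    {z : ℝ≥0∞} (hz : z ≠ 0)
    (hlt : (growthSeries (S₁ : Set G₁) z - 1) * (growthSeries (S₂ : Set G₂) z - 1) < 1) :
    growthSeries (unionGens S₁ S₂) z < ∞ := by
  have hfin₁ : growthSeries (S₁ : Set G₁) z < ∞ :=
    growthSeries_lt_top_of_sub_one <| ENNReal.lt_top_of_mul_ne_top_left
      (hlt.trans ENNReal.one_lt_top).ne (growthSeries_sub_one_ne_zero (S₂ : Set G₂) hz)
  have hfin₂ : growthSeries (S₂ : Set G₂) z < ∞ :=
    growthSeries_lt_top_of_sub_one <| ENNReal.lt_top_of_mul_ne_top_right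
      (hlt.trans ENNReal.one_lt_top).ne (growthSeries_sub_one_ne_zero (S₁ : Set G₁) hz)
  rw [growthSeries_unionGens h₁ h₂]
  exact ENNReal.mul_lt_top hfin₂
    (ENNReal.mul_lt_top (ENNReal.inv_lt_top.2 (tsub_pos_of_lt hlt)) hfin₁)

lemma tsum_pow_pair_length_growthRate [Nontrivial G₁] [Nontrivial G₂]
    (h₁ : Submonoid.closure (S₁ : Set G₁) = ⊤) (h₂ : Submonoid.closure (S₂ : Set G₂) = ⊤) :
    ∑' p : NontrivialPair G₁ G₂,
      ENNReal.ofReal (Real.exp (-growthRate (unionGens S₁ S₂))) ^ p.length S₁ S₂ = 1 := by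
  have hfin := finite_unionGens S₁ S₂
  have hgen := closure_unionGens h₁ h₂
  refine le_antisymm ?_ (not_lt.1 fun hlt ↦ ?_)
  · have hlsc : LowerSemicontinuous fun w : ℝ ↦
        ∑' p : NontrivialPair G₁ G₂, ENNReal.ofReal (Real.exp (-w)) ^ p.length S₁ S₂ :=
      lowerSemicontinuous_tsum fun p ↦ Continuous.lowerSemicontinuous <|
        (ENNReal.continuous_pow _).comp (ENNReal.continuous_ofReal.comp (by fun_prop))
    refine closure_minimal (fun w hw ↦ ?_) (hlsc.isClosed_preimage 1)
      (closure_Ioi (growthRate (unionGens S₁ S₂)) ▸ Set.self_mem_Ici)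
    rw [Set.mem_preimage, tsum_pow_pair_length]
    exact (growthSeries_sub_one_mul_lt_one h₁ h₂ (growthSeries_lt_top hfin hgen hw)).le
  · rw [tsum_pow_pair_length] at hlt
    refine (growthSeries_unionGens_lt_top h₁ h₂ ?_ hlt).ne (growthSeries_growthRate hfin hgen)
    exact (ENNReal.ofReal_pos.2 (Real.exp_pos _)).ne'

lemma tsum_exp_neg_growthRate_mul_wordLength [Nontrivial G₁] [Nontrivial G₂]
    (h₁ : Submonoid.closure (S₁ : Set G₁) = ⊤) (h₂ : Submonoid.closure (S₂ : Set G₂) = ⊤) :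
    ∑' p : NontrivialPair G₁ G₂, Real.exp
      (-(growthRate (unionGens S₁ S₂) * wordLength (unionGens S₁ S₂) p.prod)) = 1 := by
  have hsum := congrArg ENNReal.toReal (tsum_pow_pair_length_growthRate h₁ h₂)
  simp_rw [← NontrivialPair.wordLength_prod h₁ h₂, ofReal_exp_neg_pow] at hsum
  rw [ENNReal.tsum_toReal_eq fun _ ↦ ENNReal.ofReal_ne_top] at hsum
  simpa [ENNReal.toReal_ofReal (Real.exp_pos _).le] using hsum

end FreeProductGrowth

section Convolution

lemma nonneg_of_support_subset_range {X P : Type*} {μ : X → ℝ} {c : P → X}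
    (hμ : Function.support μ ⊆ Set.range c) (hc : ∀ p, 0 ≤ μ (c p)) (x : X) : 0 ≤ μ x := by
  by_cases hx : μ x = 0
  · exact hx.ge
  · obtain ⟨p, rfl⟩ := hμ hx
    exact hc p

lemma entropy_eq_mul_tsum {X : Type*} {μ : X → ℝ} {L : X → ℝ} {v : ℝ}
    (hlog : ∀ x, μ x ≠ 0 → -Real.log (μ x) = v * L x) : entropy μ = v * ∑' x, μ x * L x := by
  rw [entropy, ← tsum_mul_left]
  refine tsum_congr fun x ↦ ?_
  by_cases hx : μ x = 0
  · simp [hx]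
  · rw [hlog x hx]
    ring

variable {G P : Type*} [Group G] {μ : G → ℝ} {c : P → G}

lemma exists_list_prod_eq_of_convPow_ne_zero (hμ : Function.support μ ⊆ Set.range c) {n : ℕ}
    {g : G} (hg : convPow μ n g ≠ 0) : ∃ l : List P, l.length = n ∧ (l.map c).prod = g := by
  induction n generalizing g with
  | zero => exact ⟨[], rfl, (Set.mem_of_indicator_ne_zero hg).symm⟩
  | succ n ih =>
    obtain ⟨h, hh⟩ : ∃ h, μ h * convPow μ n (h⁻¹ * g) ≠ 0 := by
      by_contra! hzero
      exact hg ((tsum_congr hzero).trans tsum_zero)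
    obtain ⟨p, rfl⟩ := hμ (left_ne_zero_of_mul hh)
    obtain ⟨l, hl, hprod⟩ := ih (right_ne_zero_of_mul hh)
    exact ⟨p :: l, by simp [hl], by simp [hprod]⟩

lemma convPow_list_prod (hμ : Function.support μ ⊆ Set.range c)
    (hc : Function.Injective fun l : List P ↦ (l.map c).prod) (l : List P) :
    convPow μ l.length (l.map c).prod = (l.map (μ ∘ c)).prod := by
  induction l with
  | nil => simp [convPow]
  | cons p l ih =>
    have hsingle (h : G) (hne : h ≠ c p) :
        μ h * convPow μ l.length (h⁻¹ * ((p :: l).map c).prod) = 0 := by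
      by_contra hzero
      obtain ⟨q, rfl⟩ := hμ (left_ne_zero_of_mul hzero)
      obtain ⟨l', -, hprod⟩ :=
        exists_list_prod_eq_of_convPow_ne_zero hμ (right_ne_zero_of_mul hzero)
      have hcons : q :: l' = p :: l := hc (by simp [hprod])
      exact hne (congrArg c (List.cons.inj hcons).1)
    calc convPow μ (l.length + 1) ((p :: l).map c).prod
        = μ (c p) * convPow μ l.length ((c p)⁻¹ * ((p :: l).map c).prod) :=
          tsum_eq_single (c p) hsingle
      _ = ((p :: l).map (μ ∘ c)).prod := by simp [ih]

lemma convPow_list_prod_eq_exp (hμ : Function.support μ ⊆ Set.range c)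
    (hc : Function.Injective fun l : List P ↦ (l.map c).prod) {v : ℝ} {L : G → ℝ}
    (hexp : ∀ p, μ (c p) = Real.exp (-(v * L (c p))))
    (hL : ∀ l : List P, L (l.map c).prod = (l.map (L ∘ c)).sum) (l : List P) :
    convPow μ l.length (l.map c).prod = Real.exp (-(v * L (l.map c).prod)) := by
  rw [convPow_list_prod hμ hc, hL]
  induction l with
  | nil => simp
  | cons p l ih => simp [ih, hexp, mul_add, Real.exp_add, mul_comm]

lemma neg_log_convPow (hμ : Function.support μ ⊆ Set.range c)
    (hc : Function.Injective fun l : List P ↦ (l.map c).prod) {v : ℝ} {L : G → ℝ}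
    (hexp : ∀ p, μ (c p) = Real.exp (-(v * L (c p))))
    (hL : ∀ l : List P, L (l.map c).prod = (l.map (L ∘ c)).sum) {n : ℕ} {g : G}
    (hg : convPow μ n g ≠ 0) : -Real.log (convPow μ n g) = v * L g := by
  obtain ⟨l, rfl, rfl⟩ := exists_list_prod_eq_of_convPow_ne_zero hμ hg
  rw [convPow_list_prod_eq_exp hμ hc hexp hL, Real.log_exp, neg_neg]

end Convolution

theorem stmt_16_general {G₁ G₂ : Type*} [Group G₁] [Group G₂] [Nontrivial G₁] [Nontrivial G₂]
    (S₁ : Finset G₁) (S₂ : Finset G₂)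
    (hgen₁ : Submonoid.closure (S₁ : Set G₁) = ⊤) (hgen₂ : Submonoid.closure (S₂ : Set G₂) = ⊤)
    (v : ℝ)
    (hv : v = liminf (fun n : ℕ =>
      Real.log (Nat.card {g : Monoid.Coprod G₁ G₂ // wordLength (unionGens S₁ S₂) g ≤ n}) / n)
      atTop)
    (μ : Monoid.Coprod G₁ G₂ → ℝ)
    (hμ₁ : ∀ (a : G₁) (b : G₂), a ≠ 1 → b ≠ 1 →
      μ (Monoid.Coprod.inl a * Monoid.Coprod.inr b)
        = Real.exp (-(v * (wordLength (unionGens S₁ S₂)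
            (Monoid.Coprod.inl a * Monoid.Coprod.inr b) : ℝ))))
    (hμ₂ : ∀ g : Monoid.Coprod G₁ G₂,
      (¬ ∃ (a : G₁) (b : G₂), a ≠ 1 ∧ b ≠ 1 ∧ g = Monoid.Coprod.inl a * Monoid.Coprod.inr b) →
      μ g = 0)
    (h ℓ : ℝ)
    (hh : Tendsto (fun n : ℕ => entropy (convPow μ n) / n) atTop (nhds h))
    (hl : Tendsto (fun n : ℕ =>
      (∑' g, convPow μ n g * (wordLength (unionGens S₁ S₂) g : ℝ)) / n) atTop (nhds ℓ)) :
    ((∀ g, 0 ≤ μ g) ∧ ∑' g, μ g = 1) ∧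
    (∀ (n : ℕ) (a : Fin n → G₁) (b : Fin n → G₂), (∀ i, a i ≠ 1) → (∀ i, b i ≠ 1) →
      convPow μ n
          ((List.ofFn fun i => Monoid.Coprod.inl (a i) * Monoid.Coprod.inr (b i)).prod)
        = Real.exp (-(v * ∑ i : Fin n, (wordLength (unionGens S₁ S₂)
            (Monoid.Coprod.inl (a i) * Monoid.Coprod.inr (b i)) : ℝ)))) ∧
    (∀ (n : ℕ) (g : Monoid.Coprod G₁ G₂), convPow μ n g ≠ 0 →
      -Real.log (convPow μ n g) = v * (wordLength (unionGens S₁ S₂) g : ℝ)) ∧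
    h = ℓ * v := by
  have hsupp : Function.support μ ⊆ Set.range NontrivialPair.prod := fun g hg ↦ by
    obtain ⟨a, b, ha, hb, rfl⟩ := not_not.1 (mt (hμ₂ g) hg)
    exact ⟨(⟨a, ha⟩, ⟨b, hb⟩), rfl⟩
  let L (g : Monoid.Coprod G₁ G₂) : ℝ := wordLength (unionGens S₁ S₂) g
  have hexp (p : NontrivialPair G₁ G₂) : μ p.prod = Real.exp (-(v * L p.prod)) :=
    hμ₁ _ _ p.1.2 p.2.2
  have hadd (l : List (NontrivialPair G₁ G₂)) :
      L (l.map NontrivialPair.prod).prod = (l.map (L ∘ NontrivialPair.prod)).sum :=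
    NontrivialPair.natCast_wordLength_list_prod hgen₁ hgen₂ l
  have hlog (n : ℕ) (g) (hg : convPow μ n g ≠ 0) : -Real.log (convPow μ n g) = v * L g :=
    neg_log_convPow hsupp NontrivialPair.list_prod_injective hexp hadd hg
  refine ⟨⟨nonneg_of_support_subset_range hsupp fun p ↦ by rw [hexp]; positivity, ?_⟩,
    fun n a b ha hb ↦ ?_, hlog, ?_⟩
  · rw [← NontrivialPair.prod_injective.tsum_eq hsupp, tsum_congr hexp, hv]
    exact tsum_exp_neg_growthRate_mul_wordLength hgen₁ hgen₂
  · have hconv := convPow_list_prod_eq_exp hsupp NontrivialPair.list_prod_injective hexp hadd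
      (List.ofFn fun i ↦ (⟨a i, ha i⟩, ⟨b i, hb i⟩))
    rw [hadd] at hconv
    simpa [L, List.map_ofFn, List.sum_ofFn, Function.comp_def, NontrivialPair.prod] using hconv
  · refine tendsto_nhds_unique hh ?_
    simpa [entropy_eq_mul_tsum (hlog _), mul_comm, mul_div_assoc] using hl.const_mul v

/-- On a free product `Γ = Γ₁ ∗ Γ₂` of nontrivial groups with the union word metric and growth
rate `v`, the measure `μ(g₁ g₂) = e^{-v |g₁ g₂|}` (for `g₁ ∈ Γ₁∖{e}`, `g₂ ∈ Γ₂∖{e}`, and `0`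
elsewhere) is a probability measure, its convolution powers satisfy
`μ^{*n}(g₁¹g₂¹⋯g₁ⁿg₂ⁿ) = e^{-v ∑ᵢ|g₁ᵢg₂ᵢ|}`, consequently `-log μ^{*n}(g) = v|g|` on the
support of `μ^{*n}`, and `h(μ) = ℓ(μ) v`. -/
theorem stmt_16 {G₁ G₂ : Type*} [Group G₁] [Group G₂] [Nontrivial G₁] [Nontrivial G₂]
    [Countable G₁] [Countable G₂]
    (S₁ : Finset G₁) (S₂ : Finset G₂)
    (hgen₁ : Subgroup.closure (S₁ : Set G₁) = ⊤) (hsym₁ : ∀ s ∈ S₁, s⁻¹ ∈ S₁)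
    (hgen₂ : Subgroup.closure (S₂ : Set G₂) = ⊤) (hsym₂ : ∀ s ∈ S₂, s⁻¹ ∈ S₂)
    (v : ℝ)
    (hv : v = liminf (fun n : ℕ =>
      Real.log (Nat.card {g : Monoid.Coprod G₁ G₂ // wordLength (unionGens S₁ S₂) g ≤ n}) / n)
      atTop)
    (μ : Monoid.Coprod G₁ G₂ → ℝ)
    (hμ₁ : ∀ (a : G₁) (b : G₂), a ≠ 1 → b ≠ 1 →
      μ (Monoid.Coprod.inl a * Monoid.Coprod.inr b)
        = Real.exp (-(v * (wordLength (unionGens S₁ S₂)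
            (Monoid.Coprod.inl a * Monoid.Coprod.inr b) : ℝ))))
    (hμ₂ : ∀ g : Monoid.Coprod G₁ G₂,
      (¬ ∃ (a : G₁) (b : G₂), a ≠ 1 ∧ b ≠ 1 ∧ g = Monoid.Coprod.inl a * Monoid.Coprod.inr b) →
      μ g = 0)
    (h ℓ : ℝ)
    (hh : Tendsto (fun n : ℕ => entropy (convPow μ n) / n) atTop (nhds h))
    (hl : Tendsto (fun n : ℕ =>
      (∑' g, convPow μ n g * (wordLength (unionGens S₁ S₂) g : ℝ)) / n) atTop (nhds ℓ)) :
    ((∀ g, 0 ≤ μ g) ∧ ∑' g, μ g = 1) ∧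
    (∀ (n : ℕ) (a : Fin n → G₁) (b : Fin n → G₂), (∀ i, a i ≠ 1) → (∀ i, b i ≠ 1) →
      convPow μ n
          ((List.ofFn fun i => Monoid.Coprod.inl (a i) * Monoid.Coprod.inr (b i)).prod)
        = Real.exp (-(v * ∑ i : Fin n, (wordLength (unionGens S₁ S₂)
            (Monoid.Coprod.inl (a i) * Monoid.Coprod.inr (b i)) : ℝ)))) ∧
    (∀ (n : ℕ) (g : Monoid.Coprod G₁ G₂), convPow μ n g ≠ 0 →
      -Real.log (convPow μ n g) = v * (wordLength (unionGens S₁ S₂) g : ℝ)) ∧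
    h = ℓ * v :=
  stmt_16_general S₁ S₂ (submonoid_closure_eq_top_of_inv_mem hgen₁ hsym₁)
    (submonoid_closure_eq_top_of_inv_mem hgen₂ hsym₂) v hv μ hμ₁ hμ₂ h ℓ hh hl
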